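/- Let k ≥ 2 be an integer, let 0 < ξ ≤ 1 be a constant, and let G be a ξ-expanding k-graph on n vertices. Then the cop number of G satisfies c(G) ≤ 20 · ξ^{-2} · √(n/k) · log n. -/

import Mathlib

open scoped BigOperators

/-- A `k`-uniform hypergraph on vertex set `Fin n`. -/
structure KGraph (n k : ℕ) where
  edges : Finset (Finset (Fin n))
  uniform : ∀ e ∈ edges, e.card = k

namespace KGraph

variable {n k : ℕ}

/-- A loose path of edges from `x` to `y`: a nonempty list of edges, the first containing `x`,
the last containing `y`, with consecutive edges intersecting. -/
def IsLoosePath (G : KGraph n k) (x y : Fin n) (l : List (Finset (Fin n))) : Prop :=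
  l ≠ [] ∧ (∀ e ∈ l, e ∈ G.edges) ∧ (∀ e ∈ l.head?, x ∈ e) ∧
    (∀ e ∈ l.getLast?, y ∈ e) ∧ l.Chain' (fun e f => (e ∩ f).Nonempty)

/-- Distance between two vertices: the smallest length of a loose path between them
(`0` if they are equal, `⊤` if there is no such path). -/
noncomputable def dist (G : KGraph n k) (x y : Fin n) : ℕ∞ :=
  if x = y then 0
  else sInf ((fun l : List (Finset (Fin n)) => (l.length : ℕ∞)) '' {l | G.IsLoosePath x y l})

/-- Distance between two sets of vertices: the minimum over pairs. -/
noncomputable def setDist (G : KGraph n k) (A B : Set (Fin n)) : ℕ∞ :=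
  ⨅ (x ∈ A) (y ∈ B), G.dist x y

/-- The closed `r`-th vertex-neighbourhood of a set of vertices. -/
noncomputable def vNhd (G : KGraph n k) (A : Set (Fin n)) (r : ℕ) : Set (Fin n) :=
  {v | G.setDist A {v} ≤ (r : ℕ∞)}

/-- The set of vertices covered by a set of edges. -/
def VB (B : Set (Finset (Fin n))) : Set (Fin n) :=
  ⋃ e ∈ B, (e : Set (Fin n))

/-- The closed `r`-th vertex-neighbourhood of a set of edges. -/
noncomputable def vNhdE (G : KGraph n k) (B : Set (Finset (Fin n))) (r : ℕ) : Set (Fin n) :=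
  G.vNhd (VB B) r

/-- The closed `r`-th edge-neighbourhood of a set of vertices: edges within distance `r - 1`. -/
noncomputable def eNhd (G : KGraph n k) (A : Set (Fin n)) (r : ℕ) : Set (Finset (Fin n)) :=
  {e | e ∈ G.edges ∧ G.setDist (e : Set (Fin n)) A ≤ ((r - 1 : ℕ) : ℕ∞)}

/-- The average vertex degree of `G`. -/
noncomputable def avgDeg (G : KGraph n k) : ℝ :=
  (∑ v : Fin n, ((G.vNhd {v} 1).ncard : ℝ)) / n

/-- A `k`-graph on `n` vertices with average vertex degree `d ≥ k` is `ξ`-expanding if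
(A.1) edge-neighbourhoods of vertices are not too large, (A.2) vertex-neighbourhoods of vertex
sets have size comparable to `|A| d^r`, and (A.3) vertex-neighbourhoods of edge sets are large. -/
def IsExpanding (G : KGraph n k) (ξ : ℝ) : Prop :=
  (k : ℝ) ≤ G.avgDeg ∧
  (∀ v : Fin n, ∀ r : ℕ, 1 ≤ r → G.avgDeg ^ r ≤ Real.sqrt ((n : ℝ) * k) →
    ((G.eNhd {v} r).ncard : ℝ) ≤ ξ⁻¹ * G.avgDeg ^ r / k) ∧
  (∀ A : Set (Fin n), ∀ r : ℕ, 1 ≤ r →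
    ξ * min ((A.ncard : ℝ) * G.avgDeg ^ r) (n : ℝ) ≤ ((G.vNhd A r).ncard : ℝ) ∧
    ((G.vNhd A r).ncard : ℝ) ≤ ξ⁻¹ * (A.ncard : ℝ) * G.avgDeg ^ r) ∧
  (∀ B : Set (Finset (Fin n)), B ⊆ (G.edges : Set (Finset (Fin n))) → ∀ r : ℕ, 1 ≤ r →
    ξ * min ((B.ncard : ℝ) * k * G.avgDeg ^ r) (n : ℝ) ≤ ((G.vNhdE B r).ncard : ℝ))

/-- `CopsWin G c r` : with the cops currently on the vertices `c i`, the robber on `r`, and the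
cops to move, the cops have a strategy to catch the robber. Either a cop is already on the
robber's vertex; or the cops can move (each by distance at most 1) so that a cop lands on the
robber; or the cops can move so that whatever the robber's reply, the cops still win. -/
inductive CopsWin (G : KGraph n k) {m : ℕ} : (Fin m → Fin n) → Fin n → Prop
  | caught (c : Fin m → Fin n) (r : Fin n) (i : Fin m) (h : c i = r) : CopsWin G c r
  | stepCaught (c c' : Fin m → Fin n) (r : Fin n)
      (hmove : ∀ i, G.dist (c i) (c' i) ≤ 1) (i : Fin m) (h : c' i = r) : CopsWin G c r
  | step (c c' : Fin m → Fin n) (r : Fin n)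
      (hmove : ∀ i, G.dist (c i) (c' i) ≤ 1)
      (h : ∀ r' : Fin n, G.dist r r' ≤ 1 → CopsWin G c' r') : CopsWin G c r

/-- The cop number of `G` : the least `m` such that `m` cops can be initially placed so as to
catch the robber wherever he starts. -/
noncomputable def copNumber (G : KGraph n k) : ℕ :=
  sInf {m : ℕ | ∃ c₀ : Fin m → Fin n, ∀ r₀ : Fin n, CopsWin G c₀ r₀}

/-- `G` is connected if all pairs of vertices are at finite distance. -/
def Connected (G : KGraph n k) : Prop := ∀ x y : Fin n, G.dist x y ≠ ⊤

end KGraph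

open Classical in
/-- The probability that the binomial random `k`-uniform hypergraph `G^k(n,p)` (each `k`-subset
of `[n]` an edge independently with probability `p`) satisfies the property `Q`. -/
noncomputable def ghProb (n k : ℕ) (p : ℝ) (Q : KGraph n k → Prop) : ℝ :=
  ∑ E ∈ (Finset.powersetCard k (Finset.univ : Finset (Fin n))).powerset,
    if h : ∀ e ∈ E, e.card = k then
      (if Q ⟨E, h⟩ then
        p ^ E.card * (1 - p) ^ ((Finset.powersetCard k (Finset.univ : Finset (Fin n))).card - E.card)
      else 0)
    else 0

/-!
Place about `20 ξ⁻² √(n/k) log n` cops uniformly at random and let `d ^ r ≤ √(n k) < d ^ (r + 1)`.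
After `r` moves the robber is within distance `r` of his start, so he is caught if by then a cop is
adjacent to his position. If `d ^ r ≤ √(n/k)`, it is enough to send a cop to the closed
neighbourhood of every vertex within distance `r` of the start; otherwise, to every edge of the
`r`-th edge-neighbourhood of the start. In both cases there are at most `ξ⁻¹ √(n/k)` such zones,
and by expansion the vertices from which some zone of a family `S` can be reached in `r` moves are
so many that about `|S| log n` cops are expected among them. By Chernoff's inequality and a union
bound, some placement has at least `|S|` cops there for all starts and all families `S`
simultaneously; Hall's theorem then assigns distinct cops to the zones.
-/

section Metric

namespace KGraph

variable {n k : ℕ} {G : KGraph n k}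

theorem IsLoosePath.singleton {e : Finset (Fin n)} {x y : Fin n} (he : e ∈ G.edges) (hx : x ∈ e)
    (hy : y ∈ e) : G.IsLoosePath x y [e] := by
  refine ⟨by simp, by simpa using he, by simpa using hx, by simpa using hy, ?_⟩
  exact List.isChain_singleton e

theorem IsLoosePath.cons {e : Finset (Fin n)} {l : List (Finset (Fin n))} {x y z : Fin n}
    (he : e ∈ G.edges) (hx : x ∈ e) (hz : z ∈ e) (hl : G.IsLoosePath z y l) :
    G.IsLoosePath x y (e :: l) := by
  obtain ⟨hne, hedges, hhead, hlast, hchain⟩ := hl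
  obtain ⟨f, l, rfl⟩ := List.exists_cons_of_ne_nil hne
  refine ⟨by simp, by simpa [he] using hedges, by simpa using hx, ?_, ?_⟩
  · simpa using hlast
  · exact List.isChain_cons_cons.2 ⟨⟨z, Finset.mem_inter.2 ⟨hz, hhead f rfl⟩⟩, hchain⟩

/-- The 2-shadow of a hypergraph: the simple graph joining two distinct vertices whenever they
share an edge. Its walks realise the hypergraph distance, see `KGraph.dist_eq_edist_shadow`. -/
def shadow (G : KGraph n k) : SimpleGraph (Fin n) where
  Adj x y := x ≠ y ∧ ∃ e ∈ G.edges, x ∈ e ∧ y ∈ e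
  symm := ⟨fun _ _ ⟨hne, e, he, hx, hy⟩ => ⟨hne.symm, e, he, hy, hx⟩⟩
  loopless := ⟨fun _ h => h.1 rfl⟩

theorem edist_shadow_le_one_of_mem {e : Finset (Fin n)} {x y : Fin n} (he : e ∈ G.edges)
    (hx : x ∈ e) (hy : y ∈ e) : G.shadow.edist x y ≤ 1 := by
  rw [SimpleGraph.edist_le_one_iff_adj_or_eq]
  by_cases hxy : x = y
  · exact .inr hxy
  · exact .inl ⟨hxy, e, he, hx, hy⟩

theorem IsLoosePath.edist_shadow_le_length {l : List (Finset (Fin n))} {x y : Fin n}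
    (hl : G.IsLoosePath x y l) : G.shadow.edist x y ≤ l.length := by
  induction l generalizing x with
  | nil => exact absurd rfl hl.1
  | cons e l ih =>
    obtain ⟨-, hedges, hhead, hlast, hchain⟩ := hl
    have he : e ∈ G.edges := hedges e List.mem_cons_self
    have hx : x ∈ e := hhead e rfl
    cases l with
    | nil => exact edist_shadow_le_one_of_mem he hx (hlast e rfl)
    | cons f l =>
      obtain ⟨⟨z, hz⟩, htail⟩ := List.isChain_cons_cons.1 hchain
      obtain ⟨hze, hzf⟩ := Finset.mem_inter.1 hz
      have hl : G.IsLoosePath z y (f :: l) :=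
        ⟨by simp, fun g hg => hedges g (List.mem_cons_of_mem e hg), by simpa using hzf,
          by simpa using hlast, htail⟩
      calc G.shadow.edist x y ≤ G.shadow.edist x z + G.shadow.edist z y :=
            SimpleGraph.edist_triangle
        _ ≤ 1 + (f :: l).length := add_le_add (edist_shadow_le_one_of_mem he hx hze) (ih hl)
        _ = (e :: f :: l).length := by rw [add_comm, List.length_cons (a := e)]; norm_cast

theorem exists_isLoosePath_of_walk {x y : Fin n} (p : G.shadow.Walk x y) (hp : ¬p.Nil) :
    ∃ l, G.IsLoosePath x y l ∧ l.length = p.length := by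
  induction p with
  | nil => exact absurd .nil hp
  | cons h p ih =>
    obtain ⟨-, e, he, hx, hz⟩ := h
    cases p with
    | nil => exact ⟨[e], .singleton he hx hz, rfl⟩
    | cons h' p =>
      obtain ⟨l, hl, hlen⟩ := ih SimpleGraph.Walk.not_nil_cons
      exact ⟨e :: l, .cons he hx hz hl, congrArg (· + 1) hlen⟩

theorem dist_eq_edist_shadow (x y : Fin n) : G.dist x y = G.shadow.edist x y := by
  unfold dist
  split_ifs with hxy
  · exact (SimpleGraph.edist_eq_zero_iff.2 hxy).symm
  refine le_antisymm ?_ (le_sInf ?_)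
  · refine le_iInf fun p => sInf_le ?_
    obtain ⟨l, hl, hlen⟩ := exists_isLoosePath_of_walk p fun hp => hxy hp.eq
    exact ⟨l, hl, by simp [hlen]⟩
  · rintro _ ⟨l, hl, rfl⟩
    exact hl.edist_shadow_le_length

theorem dist_eq_zero_iff {x y : Fin n} : G.dist x y = 0 ↔ x = y := by
  rw [dist_eq_edist_shadow, SimpleGraph.edist_eq_zero_iff]

theorem dist_comm (x y : Fin n) : G.dist x y = G.dist y x := by
  simp only [dist_eq_edist_shadow, SimpleGraph.edist_comm]

theorem dist_le_one_iff {x y : Fin n} :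
    G.dist x y ≤ 1 ↔ x = y ∨ ∃ e ∈ G.edges, x ∈ e ∧ y ∈ e := by
  rw [dist_eq_edist_shadow, SimpleGraph.edist_le_one_iff_adj_or_eq]
  by_cases hxy : x = y <;> simp [shadow, hxy]

theorem exists_walk_length_le_of_dist_le {r : ℕ} {x y : Fin n} (h : G.dist x y ≤ r) :
    ∃ p : G.shadow.Walk x y, p.length ≤ r := by
  rw [dist_eq_edist_shadow] at h
  obtain ⟨p, hp⟩ :=
    SimpleGraph.exists_walk_of_edist_ne_top (ne_top_of_le_ne_top (ENat.natCast_ne_top r) h)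
  exact ⟨p, by exact_mod_cast hp ▸ h⟩

theorem dist_le_add_iff {r s : ℕ} {x y : Fin n} :
    G.dist x y ≤ (r + s : ℕ) ↔ ∃ z, G.dist x z ≤ r ∧ G.dist z y ≤ s := by
  constructor
  · intro h
    obtain ⟨p, hp⟩ := exists_walk_length_le_of_dist_le h
    refine ⟨p.getVert r, ?_, ?_⟩ <;> rw [dist_eq_edist_shadow]
    · exact (p.take r).edist_le.trans (by simp [SimpleGraph.Walk.take_length])
    · refine (p.drop r).edist_le.trans ?_
      rw [SimpleGraph.Walk.drop_length]
      exact_mod_cast Nat.sub_le_iff_le_add'.2 hp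
  · rintro ⟨z, hxz, hzy⟩
    simp only [dist_eq_edist_shadow] at hxz hzy ⊢
    push_cast
    exact SimpleGraph.edist_triangle.trans (add_le_add hxz hzy)

theorem setDist_le_iff {A B : Set (Fin n)} {r : ℕ} :
    G.setDist A B ≤ r ↔ ∃ x ∈ A, ∃ y ∈ B, G.dist x y ≤ r := by
  simp only [setDist, ← ENat.lt_add_one_iff (ENat.natCast_ne_top r), iInf_lt_iff, exists_prop]

theorem mem_vNhd {A : Set (Fin n)} {r : ℕ} {v : Fin n} :
    v ∈ G.vNhd A r ↔ ∃ x ∈ A, G.dist x v ≤ r := by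
  simp [vNhd, setDist_le_iff]

theorem mem_vNhd_singleton {r : ℕ} {u v : Fin n} : v ∈ G.vNhd {u} r ↔ G.dist u v ≤ r := by
  simp [mem_vNhd]

theorem mem_eNhd_singleton {r : ℕ} {v : Fin n} {e : Finset (Fin n)} :
    e ∈ G.eNhd {v} r ↔ e ∈ G.edges ∧ ∃ x ∈ e, G.dist x v ≤ (r - 1 : ℕ) := by
  simp [eNhd, setDist_le_iff, -ENat.natCast_sub]

theorem vNhd_biUnion {T : Type*} (S : Set T) (Q : T → Set (Fin n)) (r : ℕ) :
    G.vNhd (⋃ t ∈ S, Q t) r = ⋃ t ∈ S, G.vNhd (Q t) r := by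
  ext v
  simp only [mem_vNhd, Set.mem_iUnion, exists_prop]
  tauto

theorem vNhd_zero (A : Set (Fin n)) : G.vNhd A 0 = A := by
  ext v
  simp [mem_vNhd, dist_eq_zero_iff]

theorem vNhd_vNhd (A : Set (Fin n)) (r s : ℕ) : G.vNhd (G.vNhd A r) s = G.vNhd A (r + s) := by
  ext v
  simp only [mem_vNhd, dist_le_add_iff]
  tauto

theorem vNhd_singleton_of_forall_notMem {w : Fin n} (hw : ∀ e ∈ G.edges, w ∉ e) (r : ℕ) :
    G.vNhd {w} r = {w} := by
  ext y
  rw [mem_vNhd_singleton, Set.mem_singleton_iff]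
  constructor
  · intro h
    obtain ⟨p, -⟩ := exists_walk_length_le_of_dist_le h
    cases p with
    | nil => rfl
    | cons h _ =>
      obtain ⟨-, e, he, hwe, -⟩ := h
      exact absurd hwe (hw e he)
  · rintro rfl
    simp [dist_eq_zero_iff.2]

theorem exists_mem_eNhd_of_dist_le {r : ℕ} (hr : 1 ≤ r) {v w : Fin n} (hvw : G.dist v w ≤ r)
    (hcov : ∀ u, ∃ e ∈ G.edges, u ∈ e) : ∃ e ∈ G.eNhd {v} r, w ∈ e := by
  obtain ⟨s, rfl⟩ := Nat.exists_eq_add_of_le' hr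
  obtain ⟨u, hvu, huw⟩ := dist_le_add_iff.1 hvw
  obtain ⟨e, he, hue, hwe⟩ : ∃ e ∈ G.edges, u ∈ e ∧ w ∈ e := by
    rcases dist_le_one_iff.1 (by simpa using huw) with rfl | h
    · obtain ⟨e, he, hue⟩ := hcov u
      exact ⟨e, he, hue, hue⟩
    · exact h
  exact ⟨e, mem_eNhd_singleton.2 ⟨he, u, hue, by rwa [dist_comm]⟩, hwe⟩

end KGraph

end Metric

section RandomPlacement

open Finset

variable {α ι κ T : Type*} [Fintype κ]

theorem prod_ite_half_one_mem_eq_pow (A : Finset α) [DecidableEq α] (c : κ → α) :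
    ∏ i, (if c i ∈ A then (1 / 2 : ℝ) else 1) = (1 / 2) ^ #{i | c i ∈ A} := by
  rw [prod_ite, prod_const, prod_const_one, mul_one]

variable [Fintype α]

theorem exists_forall_notMem_of_sum_card_lt (s : Finset ι) (B : ι → Finset α)
    (hB : ∑ j ∈ s, #(B j) < Fintype.card α) : ∃ x, ∀ j ∈ s, x ∉ B j := by
  classical
  have hlt : #(s.biUnion B) < #(univ : Finset α) := card_biUnion_le.trans_lt hB
  obtain ⟨x, -, hx⟩ := exists_mem_notMem_of_card_lt_card hlt
  exact ⟨x, by simpa using hx⟩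

variable [DecidableEq α]

theorem sum_ite_half_one_mem_le [Nonempty α] (A : Finset α) :
    ∑ x, (if x ∈ A then (1 / 2 : ℝ) else 1) ≤
      Fintype.card α * Real.exp (-(#A / (2 * Fintype.card α))) := by
  have hterm (x : α) :
      (if x ∈ A then (1 / 2 : ℝ) else 1) = 1 - (if x ∈ A then 1 / 2 else 0) := by
    split_ifs <;> norm_num
  calc ∑ x, (if x ∈ A then (1 / 2 : ℝ) else 1)
      = Fintype.card α - #A * (1 / 2) := by
        simp_rw [hterm, sum_sub_distrib, sum_ite_mem]
        simp
    _ = Fintype.card α * (-(#A / (2 * Fintype.card α)) + 1) := by field_simp; ring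
    _ ≤ _ := by gcongr; exact Real.add_one_le_exp _

/- Chernoff's method: the weight `2 ^ s * (1 / 2) ^ hits` is at least `1` on the counted
placements, and its sum over all placements factorises. -/
theorem card_filter_card_mem_le_le [DecidableEq κ] [Nonempty α] (A : Finset α) (s : ℕ) :
    (#{c : κ → α | #{i | c i ∈ A} ≤ s} : ℝ) ≤
      2 ^ s * Real.exp (-(Fintype.card κ * #A / (2 * Fintype.card α))) *
        Fintype.card α ^ Fintype.card κ := by
  have hweight (c : κ → α) :
      (if #{i | c i ∈ A} ≤ s then (1 : ℝ) else 0) ≤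
        2 ^ s * ∏ i, (if c i ∈ A then (1 / 2 : ℝ) else 1) := by
    rw [prod_ite_half_one_mem_eq_pow]
    split_ifs with hs
    · rw [one_div, inv_pow, ← div_eq_mul_inv, one_le_div (by positivity)]
      exact pow_le_pow_right₀ one_le_two hs
    · positivity
  calc (#{c : κ → α | #{i | c i ∈ A} ≤ s} : ℝ)
      = ∑ c : κ → α, if #{i | c i ∈ A} ≤ s then (1 : ℝ) else 0 := by rw [sum_boole]
    _ ≤ ∑ c : κ → α, 2 ^ s * ∏ i, (if c i ∈ A then (1 / 2 : ℝ) else 1) :=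
      sum_le_sum fun c _ => hweight c
    _ = 2 ^ s * (∑ x, (if x ∈ A then (1 / 2 : ℝ) else 1)) ^ Fintype.card κ := by
      rw [← mul_sum, ← Fintype.piFinset_univ,
        sum_prod_piFinset univ fun _ x => if x ∈ A then (1 / 2 : ℝ) else 1]
      simp only [prod_const, card_univ]
    _ ≤ 2 ^ s * (Fintype.card α * Real.exp (-(#A / (2 * Fintype.card α)))) ^ Fintype.card κ := by
      gcongr
      exact sum_ite_half_one_mem_le A
    _ = _ := by
      rw [mul_pow, ← Real.exp_nat_mul]
      ring_nf

theorem card_filter_card_mem_le_le_inv_pow [DecidableEq κ] [Nonempty α] {n : ℕ} (hn : 2 ≤ n)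
    (A : Finset α) (s : ℕ)
    (hA : 10 * s * Real.log n * Fintype.card α ≤ Fintype.card κ * #A) :
    (#{c : κ → α | #{i | c i ∈ A} ≤ s} : ℝ) ≤
      ((n : ℝ)⁻¹ ^ 4) ^ s * Fintype.card α ^ Fintype.card κ := by
  have hn0 : (0 : ℝ) < n := by positivity
  have hexponent : 5 * s * Real.log n ≤ Fintype.card κ * #A / (2 * Fintype.card α) := by
    rw [le_div_iff₀ (by positivity)]
    linarith
  have hexp : Real.exp (-(5 * s * Real.log n)) = ((n : ℝ)⁻¹ ^ 5) ^ s := by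
    rw [show -(5 * s * Real.log n) = (5 * s : ℕ) * -Real.log n by push_cast; ring,
      Real.exp_nat_mul, Real.exp_neg, Real.exp_log hn0, pow_mul]
  have hbase : 2 * (n : ℝ)⁻¹ ^ 5 ≤ (n : ℝ)⁻¹ ^ 4 := by
    have : 2 * (n : ℝ)⁻¹ ≤ 1 := by
      rw [← div_eq_mul_inv, div_le_one hn0]
      exact_mod_cast hn
    calc 2 * (n : ℝ)⁻¹ ^ 5 = (2 * (n : ℝ)⁻¹) * (n : ℝ)⁻¹ ^ 4 := by ring
      _ ≤ (n : ℝ)⁻¹ ^ 4 := mul_le_of_le_one_left (by positivity) this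
  refine (card_filter_card_mem_le_le A s).trans ?_
  gcongr
  calc 2 ^ s * Real.exp (-(Fintype.card κ * #A / (2 * Fintype.card α)))
      ≤ 2 ^ s * Real.exp (-(5 * s * Real.log n)) := by gcongr
    _ = (2 * (n : ℝ)⁻¹ ^ 5) ^ s := by rw [hexp, mul_pow]
    _ ≤ ((n : ℝ)⁻¹ ^ 4) ^ s := by gcongr

theorem sum_powerset_erase_empty_pow_card_le [DecidableEq T] (F : Finset T) {x : ℝ} (hx : 0 ≤ x)
    (hFx : #F * x ≤ 1) : ∑ S ∈ F.powerset.erase ∅, x ^ #S ≤ 2 * (#F * x) := by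
  have hpow : (1 + x) ^ #F ≤ Real.exp (#F * x) := by
    rw [Real.exp_nat_mul, add_comm]
    exact pow_le_pow_left₀ (by positivity) (Real.add_one_le_exp x) _
  have hexp : Real.exp (#F * x) - 1 ≤ 2 * (#F * x) := by
    have habs : |#F * x| = #F * x := abs_of_nonneg (by positivity)
    calc Real.exp (#F * x) - 1 ≤ |Real.exp (#F * x) - 1| := le_abs_self _
      _ ≤ 2 * |#F * x| := Real.abs_exp_sub_one_le (by rwa [habs])
      _ = 2 * (#F * x) := by rw [habs]
  calc ∑ S ∈ F.powerset.erase ∅, x ^ #S = (1 + x) ^ #F - 1 := by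
        rw [← prod_const, prod_one_add, ← sum_erase_add _ _ (empty_mem_powerset F)]
        simp
    _ ≤ 2 * (#F * x) := by linarith

theorem sum_sum_powerset_erase_empty_inv_pow_lt_one [Fintype ι] [DecidableEq T] {n : ℕ}
    (hn : 2 ≤ n) (hι : Fintype.card ι ≤ n) (F : ι → Finset T) (hF : ∀ v, #(F v) ≤ n) :
    ∑ v, ∑ S ∈ (F v).powerset.erase ∅, ((n : ℝ)⁻¹ ^ 4) ^ #S < 1 := by
  have hinv : (n : ℝ)⁻¹ ≤ 2⁻¹ := inv_anti₀ two_pos (by exact_mod_cast hn)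
  have hinv0 : 0 < (n : ℝ)⁻¹ := by positivity
  have hinner (v : ι) : ∑ S ∈ (F v).powerset.erase ∅, ((n : ℝ)⁻¹ ^ 4) ^ #S ≤ 2 * (n : ℝ)⁻¹ ^ 3 := by
    have hle : #(F v) * (n : ℝ)⁻¹ ^ 4 ≤ (n : ℝ)⁻¹ ^ 3 := by
      calc #(F v) * (n : ℝ)⁻¹ ^ 4 ≤ n * (n : ℝ)⁻¹ ^ 4 := by gcongr; exact hF v
        _ = (n : ℝ)⁻¹ ^ 3 := by field_simp
    have hone : (n : ℝ)⁻¹ ^ 3 ≤ 1 := pow_le_one₀ hinv0.le (by linarith)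
    exact (sum_powerset_erase_empty_pow_card_le (F v) (by positivity) (hle.trans hone)).trans
      (by gcongr)
  calc ∑ v, ∑ S ∈ (F v).powerset.erase ∅, ((n : ℝ)⁻¹ ^ 4) ^ #S
      ≤ Fintype.card ι * (2 * (n : ℝ)⁻¹ ^ 3) := by
        simpa using sum_le_card_nsmul univ _ _ fun v _ => hinner v
    _ ≤ n * (2 * (n : ℝ)⁻¹ ^ 3) := by gcongr
    _ = 2 * (n : ℝ)⁻¹ ^ 2 := by field_simp
    _ < 1 := by nlinarith

variable [Fintype ι]

theorem exists_forall_card_lt_card_filter_mem [Nonempty α] {n : ℕ} (hn : 2 ≤ n)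
    (hι : Fintype.card ι ≤ n) (F : ι → Finset T) (hF : ∀ v, #(F v) ≤ n) (Z : T → Finset α)
    (hZ : ∀ v, ∀ S ⊆ F v, S.Nonempty →
      10 * #S * Real.log n * Fintype.card α ≤ Fintype.card κ * #(S.biUnion Z)) :
    ∃ c : κ → α, ∀ v, ∀ S ⊆ F v, S.Nonempty → #S < #{i | c i ∈ S.biUnion Z} := by
  classical
  have htotal : (0 : ℝ) < (Fintype.card α : ℝ) ^ Fintype.card κ := by
    have : 0 < Fintype.card α := Fintype.card_pos
    positivity
  have hbad : ∑ p ∈ univ.sigma fun v => (F v).powerset.erase ∅,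
      #{c : κ → α | #{i | c i ∈ p.2.biUnion Z} ≤ #p.2} < Fintype.card (κ → α) := by
    rw [sum_sigma, Fintype.card_fun, ← Nat.cast_lt (α := ℝ)]
    push_cast
    calc ∑ v, ∑ S ∈ (F v).powerset.erase ∅, (#{c : κ → α | #{i | c i ∈ S.biUnion Z} ≤ #S} : ℝ)
        ≤ ∑ v, ∑ S ∈ (F v).powerset.erase ∅,
            ((n : ℝ)⁻¹ ^ 4) ^ #S * Fintype.card α ^ Fintype.card κ := by
          refine sum_le_sum fun v _ => sum_le_sum fun S hS => ?_
          rw [mem_erase, mem_powerset, ← nonempty_iff_ne_empty] at hS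
          exact card_filter_card_mem_le_le_inv_pow hn _ _ (hZ v S hS.2 hS.1)
      _ = (∑ v, ∑ S ∈ (F v).powerset.erase ∅, ((n : ℝ)⁻¹ ^ 4) ^ #S) *
            Fintype.card α ^ Fintype.card κ := by simp only [sum_mul]
      _ < Fintype.card α ^ Fintype.card κ := mul_lt_of_lt_one_left htotal
          (sum_sum_powerset_erase_empty_inv_pow_lt_one hn hι F hF)
  obtain ⟨c, hc⟩ := exists_forall_notMem_of_sum_card_lt _ _ hbad
  refine ⟨c, fun v S hS hne => ?_⟩
  simpa using hc ⟨v, S⟩ (by simpa using ⟨hne.ne_empty, hS⟩)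

theorem exists_forall_exists_injective_forall_mem [Nonempty α] {n : ℕ} (hn : 2 ≤ n)
    (hι : Fintype.card ι ≤ n) (F : ι → Finset T) (hF : ∀ v, #(F v) ≤ n) (Z : T → Finset α)
    (hZ : ∀ v, ∀ S ⊆ F v, S.Nonempty →
      10 * #S * Real.log n * Fintype.card α ≤ Fintype.card κ * #(S.biUnion Z)) :
    ∃ c : κ → α, ∀ v, ∃ g : F v → κ, g.Injective ∧ ∀ t : F v, c (g t) ∈ Z t := by
  classical
  obtain ⟨c, hc⟩ := exists_forall_card_lt_card_filter_mem (κ := κ) hn hι F hF Z hZ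
  refine ⟨c, fun v => ?_⟩
  suffices hHall : ∀ S : Finset (F v), #S ≤ #(S.biUnion fun t => ({i | c i ∈ Z t} : Finset κ)) by
    simpa using (all_card_le_biUnion_card_iff_exists_injective _).1 hHall
  intro S
  rcases S.eq_empty_or_nonempty with rfl | hne
  · simp
  have hlt := hc v (S.map (.subtype _)) (map_subtype_subset S) hne.map
  rw [card_map] at hlt
  refine hlt.le.trans (card_le_card fun i hi => ?_)
  simpa using hi

end RandomPlacement

section Game

namespace KGraph

variable {n k m : ℕ} {G : KGraph n k}

theorem copsWin_of_dist_le_one {c : Fin m → Fin n} {v : Fin n} {i : Fin m}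
    (h : G.dist (c i) v ≤ 1) : CopsWin G c v := by
  refine .stepCaught c (Function.update c i v) v (fun j => ?_) i (Function.update_self ..)
  rcases eq_or_ne j i with rfl | hj
  · simpa using h
  · simp [hj, dist_eq_zero_iff.2]

theorem copsWin_of_forall_dist_le {c c' : Fin m → Fin n} {v : Fin n} {r : ℕ}
    (hc : ∀ i, G.dist (c i) (c' i) ≤ r) (hv : ∀ w, G.dist v w ≤ r → CopsWin G c' w) :
    CopsWin G c v := by
  induction r generalizing c v with
  | zero =>
    obtain rfl : c = c' := funext fun i => dist_eq_zero_iff.1 (by simpa using hc i)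
    exact hv v (by simp [dist_eq_zero_iff.2])
  | succ r ih =>
    have hstep (i : Fin m) : ∃ z, G.dist (c i) z ≤ 1 ∧ G.dist z (c' i) ≤ r := by
      rw [← Nat.cast_one, ← dist_le_add_iff, add_comm]
      exact hc i
    choose z hcz hzc' using hstep
    refine .step c z v hcz fun v' hv' => ih hzc' fun w hw => hv w ?_
    rw [add_comm]
    exact dist_le_add_iff.2 ⟨v', by simpa using hv', hw⟩

theorem copsWin_of_injective {T : Type*} {F : Finset T} {Q : T → Set (Fin n)} {r : ℕ}
    {c : Fin m → Fin n} {v : Fin n} {g : F → Fin m} (hg : g.Injective)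
    (hc : ∀ t : F, c (g t) ∈ G.vNhd (Q t) r)
    (hQ : ∀ w, G.dist v w ≤ r → ∃ t ∈ F, ∀ y ∈ Q t, G.dist y w ≤ 1) : CopsWin G c v := by
  simp only [mem_vNhd] at hc
  choose y hyQ hyc using hc
  refine copsWin_of_forall_dist_le (c' := Function.extend g y c) (r := r) (fun i => ?_) ?_
  · by_cases hi : ∃ t, g t = i
    · obtain ⟨t, rfl⟩ := hi
      rw [hg.extend_apply, dist_comm]
      exact hyc t
    · simp [Function.extend_apply' _ _ _ hi, dist_eq_zero_iff.2]
  · intro w hw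
    obtain ⟨t, ht, htw⟩ := hQ w hw
    refine copsWin_of_dist_le_one (i := g ⟨t, ht⟩) ?_
    rw [hg.extend_apply]
    exact htw _ (hyQ ⟨t, ht⟩)

theorem copNumber_le_of_forall_copsWin {c : Fin m → Fin n} (hc : ∀ v, CopsWin G c v) :
    G.copNumber ≤ m :=
  Nat.sInf_le ⟨c, hc⟩

theorem copNumber_le_card : G.copNumber ≤ n :=
  copNumber_le_of_forall_copsWin (c := id) fun v => .caught id v v rfl

/- If the robber starts at `v`, each zone `Q t` with `t ∈ F v` is reached by its own cop within
`r` moves; wherever the robber then is, some zone consists of neighbours of his position. -/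
theorem copNumber_le_of_expanding_zones {T : Type*} (hn : 2 ≤ n) (r : ℕ) (F : Fin n → Finset T)
    (hF : ∀ v, (F v).card ≤ n) (Q : T → Set (Fin n))
    (hQ : ∀ v w, G.dist v w ≤ r → ∃ t ∈ F v, ∀ y ∈ Q t, G.dist y w ≤ 1)
    (hexp : ∀ v, ∀ S ⊆ F v, S.Nonempty →
      10 * S.card * Real.log n * n ≤ m * (G.vNhd (⋃ t ∈ (S : Set T), Q t) r).ncard) :
    G.copNumber ≤ m := by
  classical
  have : Nonempty (Fin n) := ⟨0, by omega⟩
  have hcard (S : Finset T) : (S.biUnion fun t => (G.vNhd (Q t) r).toFinset).card =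
      (G.vNhd (⋃ t ∈ (S : Set T), Q t) r).ncard := by
    rw [vNhd_biUnion, ← Set.ncard_coe_finset]
    simp
  obtain ⟨c, hc⟩ := exists_forall_exists_injective_forall_mem (κ := Fin m) hn
    (Fintype.card_fin n).le F hF (fun t => (G.vNhd (Q t) r).toFinset) fun v S hS hne => by
      simpa only [hcard, Fintype.card_fin] using hexp v S hS hne
  refine copNumber_le_of_forall_copsWin (c := c) fun v => ?_
  obtain ⟨g, hg, hgQ⟩ := hc v
  exact copsWin_of_injective hg (fun t => Set.mem_toFinset.1 (hgQ t)) (hQ v)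

end KGraph

end Game

section Expansion

theorem mul_sqrt_div_self {x y : ℝ} (hy : 0 < y) : y * √(x / y) = √(x * y) := by
  rw [show x * y = y ^ 2 * (x / y) by field_simp, Real.sqrt_mul (sq_nonneg y), Real.sqrt_sq hy.le]

theorem sqrt_div_mul_sqrt_mul {x y : ℝ} (hx : 0 ≤ x) (hy : 0 < y) : √(x / y) * √(x * y) = x := by
  rw [← mul_sqrt_div_self hy, mul_left_comm, Real.mul_self_sqrt (by positivity)]
  field_simp

theorem ten_mul_mul_log_mul_le {x y ξ m s W : ℝ} (hx : 1 ≤ x) (hy : 0 < y) (hξ0 : 0 < ξ)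
    (hξ1 : ξ ≤ 1) (hm : 10 * ξ⁻¹ ^ 2 * √(x / y) * Real.log x ≤ m) (hs0 : 0 ≤ s)
    (hs : s ≤ ξ⁻¹ * √(x / y)) (hW : ξ * min (s * √(x * y)) x ≤ W) :
    10 * s * Real.log x * x ≤ m * W := by
  have hlog : 0 ≤ Real.log x := Real.log_nonneg hx
  have hξ : 1 ≤ ξ⁻¹ := (one_le_inv₀ hξ0).2 hξ1
  have hm0 : 0 ≤ m := le_trans (by positivity) hm
  have hmin : s * x ≤ ξ⁻¹ * √(x / y) * min (s * √(x * y)) x := by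
    rw [mul_min_of_nonneg _ _ (by positivity), le_min_iff]
    constructor
    · calc s * x = s * (√(x / y) * √(x * y)) := by rw [sqrt_div_mul_sqrt_mul (by linarith) hy]
        _ ≤ ξ⁻¹ * (s * (√(x / y) * √(x * y))) := le_mul_of_one_le_left (by positivity) hξ
        _ = ξ⁻¹ * √(x / y) * (s * √(x * y)) := by ring
    · gcongr
  calc 10 * s * Real.log x * x = 10 * Real.log x * (s * x) := by ring
    _ ≤ 10 * Real.log x * (ξ⁻¹ * √(x / y) * min (s * √(x * y)) x) := by gcongr
    _ = 10 * ξ⁻¹ ^ 2 * √(x / y) * Real.log x * (ξ * min (s * √(x * y)) x) := by field_simp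
    _ ≤ m * W := by gcongr

theorem half_le_log_of_two_le {x : ℝ} (hx : 2 ≤ x) : 1 / 2 ≤ Real.log x := by
  have hinv : x⁻¹ ≤ 2⁻¹ := inv_anti₀ two_pos hx
  have := Real.one_sub_inv_le_log_of_pos (by linarith : 0 < x)
  linarith

namespace KGraph

variable {n k m r : ℕ} {G : KGraph n k} {ξ : ℝ}

theorem avgDeg_le_card : G.avgDeg ≤ n := by
  refine div_le_of_le_mul₀ n.cast_nonneg n.cast_nonneg ?_
  have hdeg (v : Fin n) : ((G.vNhd {v} 1).ncard : ℝ) ≤ n := by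
    exact_mod_cast (Set.ncard_le_card (G.vNhd {v} 1)).trans (Nat.card_fin n).le
  simpa using Finset.sum_le_card_nsmul Finset.univ _ _ fun v _ => hdeg v

namespace IsExpanding

theorem uniformity_le_card (hG : G.IsExpanding ξ) : k ≤ n := by
  exact_mod_cast hG.1.trans avgDeg_le_card

theorem one_le_sqrt_card_div (hG : G.IsExpanding ξ) (hk : 0 < k) : 1 ≤ √((n : ℝ) / k) := by
  rw [Real.one_le_sqrt, one_le_div (by exact_mod_cast hk)]
  exact_mod_cast hG.uniformity_le_card

theorem ncard_vNhd_singleton_le (hG : G.IsExpanding ξ) (hξ0 : 0 < ξ) (hξ1 : ξ ≤ 1) (v : Fin n)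
    (r : ℕ) : ((G.vNhd {v} r).ncard : ℝ) ≤ ξ⁻¹ * G.avgDeg ^ r := by
  rcases r.eq_zero_or_pos with rfl | hr
  · simpa [vNhd_zero] using (one_le_inv₀ hξ0).2 hξ1
  · simpa using (hG.2.2.1 {v} r hr).2

theorem exists_edge_mem (hG : G.IsExpanding ξ) (hd : 1 < G.avgDeg) (hξn : 1 < ξ * n) (w : Fin n) :
    ∃ e ∈ G.edges, w ∈ e := by
  by_contra! hw
  obtain ⟨s, hs⟩ := pow_unbounded_of_one_lt (n : ℝ) hd
  have hs' : (n : ℝ) ≤ G.avgDeg ^ (s + 1) := hs.le.trans (pow_le_pow_right₀ hd.le s.le_succ)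
  have hexp := (hG.2.2.1 {w} (s + 1) (by omega)).1
  rw [vNhd_singleton_of_forall_notMem hw, Set.ncard_singleton, Nat.cast_one, one_mul,
    min_eq_right hs'] at hexp
  linarith

theorem copNumber_le_of_avgDeg_pow_le (hG : G.IsExpanding ξ) (hn : 2 ≤ n) (hk : 0 < k)
    (hξ0 : 0 < ξ) (hξ1 : ξ ≤ 1) (hm : 10 * ξ⁻¹ ^ 2 * √((n : ℝ) / k) * Real.log n ≤ m)
    (hr : G.avgDeg ^ r ≤ √((n : ℝ) / k)) (hr' : √((n : ℝ) * k) ≤ G.avgDeg ^ (r + 1)) :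
    G.copNumber ≤ m := by
  classical
  refine copNumber_le_of_expanding_zones hn r (fun v => (G.vNhd {v} r).toFinset)
    (fun v => (Finset.card_le_univ _).trans (Fintype.card_fin n).le) (fun u => G.vNhd {u} 1)
    (fun v w hvw => ⟨w, by simpa [mem_vNhd_singleton] using hvw, fun y hy => ?_⟩)
    fun v S hS _ => ?_
  · rw [dist_comm]
    simpa [mem_vNhd_singleton] using hy
  rw [← vNhd_biUnion, Set.biUnion_of_singleton, vNhd_vNhd, add_comm 1 r]
  refine ten_mul_mul_log_mul_le (by exact_mod_cast one_le_two.trans hn) (by exact_mod_cast hk)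
    hξ0 hξ1 hm S.card.cast_nonneg ?_ ?_
  · have hcard : S.card ≤ (G.vNhd {v} r).ncard := by
      rw [Set.ncard_eq_toFinset_card']
      exact Finset.card_le_card hS
    calc (S.card : ℝ) ≤ (G.vNhd {v} r).ncard := by exact_mod_cast hcard
      _ ≤ ξ⁻¹ * G.avgDeg ^ r := hG.ncard_vNhd_singleton_le hξ0 hξ1 v r
      _ ≤ ξ⁻¹ * √((n : ℝ) / k) := by gcongr
  · refine le_trans ?_ (hG.2.2.1 S (r + 1) (by omega)).1
    rw [Set.ncard_coe_finset]
    gcongr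

theorem copNumber_le_of_le_avgDeg_pow (hG : G.IsExpanding ξ) (hn : 2 ≤ n) (hk : 0 < k)
    (hξ0 : 0 < ξ) (hξ1 : ξ ≤ 1) (hξn : ξ⁻¹ * √((n : ℝ) / k) ≤ n)
    (hcov : ∀ w, ∃ e ∈ G.edges, w ∈ e)
    (hm : 10 * ξ⁻¹ ^ 2 * √((n : ℝ) / k) * Real.log n ≤ m) (hr1 : 1 ≤ r)
    (hr : √((n : ℝ) / k) ≤ G.avgDeg ^ r) (hr' : G.avgDeg ^ r ≤ √((n : ℝ) * k)) :
    G.copNumber ≤ m := by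
  classical
  have hk0 : (0 : ℝ) < k := by exact_mod_cast hk
  have hcard (v : Fin n) : ((G.eNhd {v} r).toFinset.card : ℝ) ≤ ξ⁻¹ * √((n : ℝ) / k) := by
    rw [← Set.ncard_eq_toFinset_card']
    refine (hG.2.1 v r hr1 hr').trans ?_
    rw [div_le_iff₀ hk0, mul_assoc, mul_comm _ (k : ℝ), mul_sqrt_div_self hk0]
    gcongr
  refine copNumber_le_of_expanding_zones hn r (fun v => (G.eNhd {v} r).toFinset)
    (fun v => by exact_mod_cast (hcard v).trans hξn) (fun e => (e : Set (Fin n)))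
    (fun v w hvw => ?_) fun v S hS _ => ?_
  · obtain ⟨e, he, hwe⟩ := exists_mem_eNhd_of_dist_le hr1 hvw hcov
    exact ⟨e, Set.mem_toFinset.2 he, fun y hy => dist_le_one_iff.2 (.inr ⟨e, he.1, hy, hwe⟩)⟩
  have hSE : (S : Set (Finset (Fin n))) ⊆ G.edges := fun e he => (Set.mem_toFinset.1 (hS he)).1
  refine ten_mul_mul_log_mul_le (by exact_mod_cast one_le_two.trans hn) hk0 hξ0 hξ1 hm
    S.card.cast_nonneg ((Nat.cast_le.2 (Finset.card_le_card hS)).trans (hcard v)) ?_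
  refine le_trans ?_ (hG.2.2.2 S hSE r hr1)
  rw [Set.ncard_coe_finset, mul_assoc, ← mul_sqrt_div_self hk0]
  gcongr

theorem copNumber_le (hG : G.IsExpanding ξ) (hk : 2 ≤ k) (hξ0 : 0 < ξ) (hξ1 : ξ ≤ 1)
    (hm : 10 * ξ⁻¹ ^ 2 * √((n : ℝ) / k) * Real.log n ≤ m) : G.copNumber ≤ m := by
  rcases le_or_gt n m with hnm | hmn
  · exact copNumber_le_card.trans hnm
  have hn : 2 ≤ n := hk.trans hG.uniformity_le_card
  have hd : 1 < G.avgDeg := lt_of_lt_of_le (by exact_mod_cast hk) hG.1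
  have hq : 1 ≤ √((n : ℝ) / k) := hG.one_le_sqrt_card_div (by omega)
  have hξ : 1 ≤ ξ⁻¹ := (one_le_inv₀ hξ0).2 hξ1
  have hξn : ξ⁻¹ * √((n : ℝ) / k) < n := by
    have hlog : 1 / 2 ≤ Real.log n := half_le_log_of_two_le (by exact_mod_cast hn)
    calc ξ⁻¹ * √((n : ℝ) / k) ≤ ξ⁻¹ * (ξ⁻¹ * √((n : ℝ) / k) * (10 * Real.log n)) := by
          gcongr
          nlinarith [one_le_mul_of_one_le_of_one_le hξ hq]
      _ = 10 * ξ⁻¹ ^ 2 * √((n : ℝ) / k) * Real.log n := by ring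
      _ < n := hm.trans_lt (by exact_mod_cast hmn)
  have hsqrt : 1 ≤ √((n : ℝ) * k) := by
    rw [Real.one_le_sqrt]
    exact_mod_cast Nat.mul_pos (by omega) (by omega)
  obtain ⟨r, hr, hr'⟩ := exists_nat_pow_near hsqrt hd
  rcases le_or_gt (G.avgDeg ^ r) √((n : ℝ) / k) with hrq | hrq
  · exact hG.copNumber_le_of_avgDeg_pow_le hn (by omega) hξ0 hξ1 hm hrq hr'.le
  have hr1 : 1 ≤ r := by
    by_contra! h0
    obtain rfl : r = 0 := by omega
    linarith [pow_zero G.avgDeg]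
  have hcov : ∀ w, ∃ e ∈ G.edges, w ∈ e := by
    refine hG.exists_edge_mem hd ?_
    rw [← inv_lt_iff_one_lt_mul₀' hξ0]
    exact (le_mul_of_one_le_right (by positivity) hq).trans_lt hξn
  exact hG.copNumber_le_of_le_avgDeg_pow hn (by omega) hξ0 hξ1 hξn.le hcov hm hr1 hrq.le hr

end IsExpanding

end KGraph

end Expansion

/-- a `ξ`-expanding `k`-graph on `n` vertices has cop number at most
`20 ξ⁻² √(n/k) log n`. -/
theorem cop_number_expanding_meyniel (n k : ℕ) (hk : 2 ≤ k) (ξ : ℝ) (hξ0 : 0 < ξ) (hξ1 : ξ ≤ 1)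
    (G : KGraph n k) (hG : G.IsExpanding ξ) :
    (G.copNumber : ℝ) ≤ 20 * ξ⁻¹ ^ 2 * Real.sqrt ((n : ℝ) / k) * Real.log n := by
  set M := 20 * ξ⁻¹ ^ 2 * √((n : ℝ) / k) * Real.log n with hM
  have hq : 1 ≤ √((n : ℝ) / k) := hG.one_le_sqrt_card_div (by omega)
  have hlog : 1 / 2 ≤ Real.log n :=
    half_le_log_of_two_le (by exact_mod_cast hk.trans hG.uniformity_le_card)
  have hξ : 1 ≤ ξ⁻¹ ^ 2 := one_le_pow₀ ((one_le_inv₀ hξ0).2 hξ1)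
  have hM1 : 1 ≤ M :=
    calc (1 : ℝ) ≤ 20 * 1 * 1 * (1 / 2) := by norm_num
      _ ≤ M := by rw [hM]; gcongr
  have hfloor : 10 * ξ⁻¹ ^ 2 * √((n : ℝ) / k) * Real.log n ≤ ⌊M⌋₊ :=
    calc _ = M / 2 := by rw [hM]; ring
      _ ≤ ⌊M⌋₊ := (Nat.div_two_lt_floor hM1).le
  exact (Nat.le_floor_iff (by linarith)).1 (hG.copNumber_le hk hξ0 hξ1 hfloor)
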